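/- (Hadamard case, ψ(t) = ln t) Let 0 < a < b. Suppose q: (a,b) → ℝ is measurable with ∫_a^b |q(τ)|/τ dτ < ∞, κ ∈ (0,1), and |𝒢(x)| ≤ κ·‖x‖ for all x ∈ C([a,b],ℝ). If there exists a nontrivial continuous function x: [a,b] → ℝ satisfying x(t) = (ln(t/a)/ln(b/a))^β·𝒢(x) + ∫_a^b G(τ,t)·(q(τ)/τ)·x(τ) dτ for all t ∈ [a,b], then ∫_a^b |q(τ)|/τ dτ ≥ (1−κ)·Γ(α+β)/(ln(b/a))^{α+β−1}. -/

import Mathlib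

open MeasureTheory Set

/-- The Green function in the Hadamard case `ψ(t) = ln t`. -/
noncomputable def G (a b α β : ℝ) (τ t : ℝ) : ℝ :=
  if τ ≤ t then
    (Real.log (t / a)) ^ β * (Real.log (b / τ)) ^ (α + β - 1) /
        (Real.Gamma (α + β) * (Real.log (b / a)) ^ β) -
      (Real.log (t / τ)) ^ (α + β - 1) / Real.Gamma (α + β)
  else
    (Real.log (t / a)) ^ β * (Real.log (b / τ)) ^ (α + β - 1) /
      (Real.Gamma (α + β) * (Real.log (b / a)) ^ β)

/-- The supremum norm of a function over the interval `[a,b]`. -/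
noncomputable def supNorm (a b : ℝ) (x : ℝ → ℝ) : ℝ :=
  ⨆ t : Set.Icc a b, |x ↑t|

theorem G_abs_le (a b α β τ t : ℝ) (ha : 0 < a) (hab : a < b) (hβ0 : 0 < β)
    (hαβ : 1 < α + β) (hτ1 : a ≤ τ) (hτ2 : τ ≤ b) (ht1 : a ≤ t) (ht2 : t ≤ b) :
    |G a b α β τ t| ≤ (Real.log (b / a)) ^ (α + β - 1) / Real.Gamma (α + β) := by
  have hΓ : 0 < Real.Gamma (α + β) := Real.Gamma_pos_of_pos (by linarith)
  have hτ : 0 < τ := by linarith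
  have ht : 0 < t := by linarith
  have hb : 0 < b := by linarith
  have hL : 0 < Real.log (b / a) := Real.log_pos (by rw [one_lt_div ha]; exact hab)
  have hγ : 0 ≤ α + β - 1 := by linarith
  have h1 : 0 ≤ Real.log (t / a) := Real.log_nonneg (by rw [one_le_div ha]; exact ht1)
  have h2 : Real.log (t / a) ≤ Real.log (b / a) :=
    Real.log_le_log (by positivity) (by gcongr)
  have h3 : 0 ≤ Real.log (b / τ) := Real.log_nonneg (by rw [one_le_div hτ]; exact hτ2)
  have h4 : Real.log (b / τ) ≤ Real.log (b / a) :=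
    Real.log_le_log (by positivity) (by gcongr)
  have hLβ : 0 < (Real.log (b / a)) ^ β := Real.rpow_pos_of_pos hL _
  have hA0 : 0 ≤ (Real.log (t / a)) ^ β * (Real.log (b / τ)) ^ (α + β - 1) /
      (Real.Gamma (α + β) * (Real.log (b / a)) ^ β) := by positivity
  have hA1 : (Real.log (t / a)) ^ β * (Real.log (b / τ)) ^ (α + β - 1) /
      (Real.Gamma (α + β) * (Real.log (b / a)) ^ β) ≤
      (Real.log (b / a)) ^ (α + β - 1) / Real.Gamma (α + β) := by
    have e : (Real.log (b / a)) ^ (α + β - 1) / Real.Gamma (α + β) =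
      (Real.log (b / a)) ^ β * (Real.log (b / a)) ^ (α + β - 1) /
      (Real.Gamma (α + β) * (Real.log (b / a)) ^ β) := by
      field_simp
    rw [e]
    gcongr
  unfold G
  split_ifs with h
  · have h5 : 0 ≤ Real.log (t / τ) := Real.log_nonneg (by rw [one_le_div hτ]; exact h)
    have h6 : Real.log (t / τ) ≤ Real.log (b / a) :=
      Real.log_le_log (by positivity) (by gcongr)
    have hB0 : 0 ≤ (Real.log (t / τ)) ^ (α + β - 1) / Real.Gamma (α + β) := by positivity
    have hB1 : (Real.log (t / τ)) ^ (α + β - 1) / Real.Gamma (α + β) ≤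
      (Real.log (b / a)) ^ (α + β - 1) / Real.Gamma (α + β) := by gcongr
    rw [abs_le]
    constructor <;> linarith
  · rw [abs_of_nonneg hA0]
    exact hA1

theorem lyapunov_hadamard
    (a b α β κ : ℝ) (ha : 0 < a) (hab : a < b)
    (hα0 : 0 < α) (hα1 : α ≤ 1) (hβ0 : 0 < β) (hβ1 : β ≤ 1) (hαβ : 1 < α + β)
    (q : ℝ → ℝ) (𝒢 : (ℝ → ℝ) → ℝ)
    (hq_meas : AEStronglyMeasurable q (volume.restrict (Set.Ioo a b)))
    (hq : IntervalIntegrable (fun τ => |q τ| / τ) volume a b)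
    (hκ0 : 0 < κ) (hκ1 : κ < 1)
    (h𝒢 : ∀ x : ℝ → ℝ, ContinuousOn x (Set.Icc a b) → |𝒢 x| ≤ κ * supNorm a b x)
    (x : ℝ → ℝ) (hx_cont : ContinuousOn x (Set.Icc a b))
    (hx_nontrivial : ∃ t ∈ Set.Icc a b, x t ≠ 0)
    (hmild : ∀ t ∈ Set.Icc a b,
      x t = (Real.log (t / a) / Real.log (b / a)) ^ β * 𝒢 x +
        ∫ τ in a..b, G a b α β τ t * (q τ / τ) * x τ) :
    ∫ τ in a..b, |q τ| / τ ≥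
      (1 - κ) * Real.Gamma (α + β) / (Real.log (b / a)) ^ (α + β - 1) := by
  have hL : 0 < Real.log (b / a) := Real.log_pos (by rw [one_lt_div ha]; exact hab)
  have hΓ : 0 < Real.Gamma (α + β) := Real.Gamma_pos_of_pos (by linarith)
  have hP : 0 < (Real.log (b / a)) ^ (α + β - 1) := Real.rpow_pos_of_pos hL _
  obtain ⟨t, ht, hmax⟩ := isCompact_Icc.exists_isMaxOn (nonempty_Icc.2 hab.le) hx_cont.abs
  have hmax' : ∀ s ∈ Icc a b, |x s| ≤ |x t| := fun s hs => hmax hs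
  obtain ⟨s, hs, hxs⟩ := hx_nontrivial
  have hN : 0 < |x t| := lt_of_lt_of_le (abs_pos.2 hxs) (hmax' s hs)
  have hsup : supNorm a b x ≤ |x t| := by
    haveI : Nonempty (Icc a b) := ⟨⟨t, ht⟩⟩
    exact ciSup_le fun s => hmax' s s.2
  have hG : |𝒢 x| ≤ κ * |x t| := (h𝒢 x hx_cont).trans (by gcongr)
  set M := (Real.log (b / a)) ^ (α + β - 1) / Real.Gamma (α + β) with hM
  have hMpos : 0 < M := by positivity
  have hint : |∫ τ in a..b, G a b α β τ t * (q τ / τ) * x τ| ≤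
      ∫ τ in a..b, M * |x t| * (|q τ| / τ) := by
    rw [← Real.norm_eq_abs]
    refine intervalIntegral.norm_integral_le_of_norm_le hab.le ?_ (hq.const_mul _)
    refine Filter.Eventually.of_forall fun τ hτ => ?_
    have hτ0 : 0 < τ := ha.trans hτ.1
    have g1 := G_abs_le a b α β τ t ha hab hβ0 hαβ hτ.1.le hτ.2 ht.1 ht.2
    have g2 := hmax' τ ⟨hτ.1.le, hτ.2⟩
    rw [Real.norm_eq_abs, abs_mul, abs_mul, abs_div, abs_of_pos hτ0]
    calc |G a b α β τ t| * (|q τ| / τ) * |x τ| ≤ M * (|q τ| / τ) * |x t| := by gcongr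
      _ = M * |x t| * (|q τ| / τ) := by ring
  rw [intervalIntegral.integral_const_mul] at hint
  have hr0 : 0 ≤ Real.log (t / a) / Real.log (b / a) :=
    div_nonneg (Real.log_nonneg (by rw [one_le_div ha]; exact ht.1)) hL.le
  have hr1 : Real.log (t / a) / Real.log (b / a) ≤ 1 := by
    rw [div_le_one hL]
    have h0 : 0 < t := ha.trans_le ht.1
    exact Real.log_le_log (by positivity) (by have := ht.2; gcongr)
  have hp1 := Real.rpow_le_one hr0 hr1 hβ0.le
  have hp0 := Real.rpow_nonneg hr0 β
  have key : |x t| ≤ κ * |x t| + M * |x t| * ∫ τ in a..b, |q τ| / τ := by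
    calc |x t| = _ := congrArg _ (hmild t ht)
      _ ≤ _ := abs_add_le _ _
      _ ≤ _ := by
        refine add_le_add ?_ hint
        rw [abs_mul, abs_of_nonneg hp0]
        exact (mul_le_of_le_one_left (abs_nonneg _) hp1).trans hG
  have key2 : 1 - κ ≤ M * ∫ τ in a..b, |q τ| / τ := by
    refine le_of_mul_le_mul_right ?_ hN
    linarith
  have e : (1 - κ) * Real.Gamma (α + β) / (Real.log (b / a)) ^ (α + β - 1) = (1 - κ) / M := by
    rw [hM]; field_simp
  rw [e, ge_iff_le, div_le_iff₀ hMpos]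
  linarith
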